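/- arXiv:hep-th/9808170 — 3 statements merged into one kernel-verified Lean document; each statement's English description precedes it below -/
import Mathlib

section
/- For all integers n ≥ 2 and 0 ≤ k ≤ n−2, one has −(1/2)·∑_{q ≥ 1} [ C(2n−2−2k, qn−(k+1)) − 4·C(2n−4−2k, qn−(k+2)) ] = (2(n−2−k))! / ((n−2−k)!·(n−1−k)!), where the sum runs over positive integers q and has only finitely many nonzero terms. -/
/-!
Put `m = n - 2 - k`. For `q ≥ 2` (index at least `1` in the `tsum`, which runs over `q - 1`) both
lower indices exceed the upper ones, so only `q = 1` contributes, and it contributes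
`C(2m+2, m+1) - 4 C(2m, m)`. The recurrence `(m+1) C(2m+2, m+1) = 2 (2m+1) C(2m, m)`
turns this into `-2 C(2m, m) / (m+1)`, that is, `-2` times the `m`-th Catalan number.
-/

/-- Binomial coefficient with integer arguments, with the convention
`C a b = 0` unless `0 ≤ b ≤ a`. -/
noncomputable def binomR (a b : ℤ) : ℝ :=
  if 0 ≤ b ∧ b ≤ a then ((a.toNat.choose b.toNat : ℕ) : ℝ) else 0

theorem binomR_eq_zero_of_lt {a b : ℤ} (h : a < b) : binomR a b = 0 :=
  if_neg fun hab => absurd hab.2 (not_le.mpr h)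

theorem binomR_two_mul_self (m : ℕ) : binomR (2 * (m : ℤ)) m = (m.centralBinom : ℝ) := by
  have h : (2 * (m : ℤ)).toNat = 2 * m := by omega
  rw [binomR, if_pos (by omega), h, Int.toNat_natCast, Nat.centralBinom_eq_two_mul_choose]

theorem centralBinom_succ_sub (m : ℕ) :
    -(1 / 2) * (((m + 1).centralBinom : ℝ) - 4 * (m.centralBinom : ℝ)) =
      ((2 * m).factorial : ℝ) / ((m.factorial : ℝ) * ((m + 1).factorial : ℝ)) := by
  have h1 : ((m : ℝ) + 1) * ((m + 1).centralBinom : ℝ)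
      = 2 * (2 * (m : ℝ) + 1) * (m.centralBinom : ℝ) := by
    exact_mod_cast Nat.succ_mul_centralBinom_succ m
  have h2 : (m.centralBinom : ℝ) * (m.factorial : ℝ) * (m.factorial : ℝ)
      = ((2 * m).factorial : ℝ) := by
    have h := Nat.choose_mul_factorial_mul_factorial (show m ≤ 2 * m by omega)
    rw [show 2 * m - m = m by omega, ← Nat.centralBinom_eq_two_mul_choose] at h
    exact_mod_cast h
  have h3 : ((m + 1).factorial : ℝ) = ((m : ℝ) + 1) * (m.factorial : ℝ) := by
    exact_mod_cast Nat.factorial_succ m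
  have hm : (m.factorial : ℝ) ≠ 0 := by positivity
  have hm' : (m : ℝ) + 1 ≠ 0 := by positivity
  rw [h3, ← h2, eq_div_iff (by positivity)]
  linear_combination (-(1 / 2) * (m.factorial : ℝ) ^ 2) * h1

/-- The `d = 0` specialization of the binomial closed formula equals the Catalan-type
two-point intersection number `⟨x₁^{2n−4−2k} x₂^k⟩` on the Grassmannian `G₂(Cⁿ)`. -/
theorem binomial_formula_grassmannian (n k : ℕ) (hn : 2 ≤ n) (hk : k ≤ n - 2) :
    -(1 / 2) * ∑' q : ℕ,
        (binomR (2 * (n : ℤ) - 2 - 2 * (k : ℤ)) (((q : ℤ) + 1) * (n : ℤ) - ((k : ℤ) + 1))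
          - 4 * binomR (2 * (n : ℤ) - 4 - 2 * (k : ℤ)) (((q : ℤ) + 1) * (n : ℤ) - ((k : ℤ) + 2)))
      = ((2 * (n - 2 - k)).factorial : ℝ) /
          (((n - 2 - k).factorial : ℝ) * ((n - 1 - k).factorial : ℝ)) := by
  obtain ⟨m, rfl⟩ : ∃ m, n = m + k + 2 := ⟨n - 2 - k, by omega⟩
  rw [tsum_eq_single 0]
  · have e1 : 2 * ((m + k + 2 : ℕ) : ℤ) - 2 - 2 * (k : ℤ) = 2 * ((m + 1 : ℕ) : ℤ) := by
      push_cast; ring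
    have e2 : (((0 : ℕ) : ℤ) + 1) * ((m + k + 2 : ℕ) : ℤ) - ((k : ℤ) + 1) = ((m + 1 : ℕ) : ℤ) := by
      push_cast; ring
    have e3 : 2 * ((m + k + 2 : ℕ) : ℤ) - 4 - 2 * (k : ℤ) = 2 * (m : ℤ) := by
      push_cast; ring
    have e4 : (((0 : ℕ) : ℤ) + 1) * ((m + k + 2 : ℕ) : ℤ) - ((k : ℤ) + 2) = (m : ℤ) := by
      push_cast; ring
    rw [e1, e2, e3, e4, binomR_two_mul_self, binomR_two_mul_self,
      show m + k + 2 - 2 - k = m by omega, show m + k + 2 - 1 - k = m + 1 by omega]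
    exact centralBinom_succ_sub m
  · intro q hq
    have h : 2 * ((m + k + 2 : ℕ) : ℤ) ≤ ((q : ℤ) + 1) * ((m + k + 2 : ℕ) : ℤ) :=
      mul_le_mul_of_nonneg_right (by omega) (by omega)
    rw [binomR_eq_zero_of_lt (by linarith), binomR_eq_zero_of_lt (by linarith)]
    simp
end

section
/- For every integer d ≥ 0, one has ((−1)^{d+1}/2)·∑_{q ≥ 1} [ C(8+5d, 5q−1) − 4·C(6+5d, 5q−2) ] = F_{5(d+1)}, where F_m denotes the m-th Fibonacci number (F₀ = 0, F₁ = F₂ = 1) and the sum over positive integers q has only finitely many nonzero terms. -/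
/-- The sum of the binomial coefficients `C(n, k)` over all `k` congruent to `r` modulo `5`. -/
def residueSum (n : ℕ) (r : ZMod 5) : ℤ :=
  ∑ k ∈ Finset.range (n + 1), if (k : ZMod 5) = r then (n.choose k : ℤ) else 0

theorem residueSum_succ (n : ℕ) (r : ZMod 5) :
    residueSum (n + 1) r = residueSum n r + residueSum n (r - 1) := by
  have h : residueSum n r = ∑ k ∈ Finset.range (n + 2),
      if (k : ZMod 5) = r then (n.choose k : ℤ) else 0 := by
    rw [Finset.sum_range_succ]
    simp [residueSum]
  rw [h, residueSum, residueSum, Finset.sum_range_succ', Finset.sum_range_succ' _ (n + 1),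
    add_right_comm, ← Finset.sum_add_distrib]
  congr 1
  swap
  · simp
  refine Finset.sum_congr rfl fun k _ => ?_
  simp only [Nat.choose_succ_succ, Nat.cast_add, Nat.cast_one, eq_sub_iff_add_eq]
  split_ifs <;> ring

theorem residueSum_succ_five (n : ℕ) (r : ZMod 5) :
    residueSum (n + 5) r = 2 * residueSum n r + 5 * residueSum n (r - 1)
      + 10 * residueSum n (r - 2) + 10 * residueSum n (r - 3) + 5 * residueSum n (r - 4) := by
  have e2 : r - 1 - 1 = r - 2 := by ring
  have e3 : r - 2 - 1 = r - 3 := by ring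
  have e4 : r - 3 - 1 = r - 4 := by ring
  have e5 : r - 4 - 1 = r := by
    have h : (5 : ZMod 5) = 0 := rfl
    linear_combination -h
  simp only [residueSum_succ, e2, e3, e4, e5]
  ring

/-- The symmetry of the residue sums at `N = 5 d + 6`, and their differences as signed Fibonacci
numbers. Only the second and third conjuncts matter for the series; the other two make the induction
close. -/
theorem residueSum_fib (d : ℕ) :
    residueSum (5 * d + 6) 0 = residueSum (5 * d + 6) 1 ∧
    residueSum (5 * d + 6) 2 = residueSum (5 * d + 6) 4 ∧
    residueSum (5 * d + 6) 2 - residueSum (5 * d + 6) 3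
      = (-1) ^ (d + 1) * (Nat.fib (5 * (d + 1)) : ℤ) ∧
    residueSum (5 * d + 6) 0 - residueSum (5 * d + 6) 2
      = (-1) ^ (d + 1) * (Nat.fib (5 * (d + 1) + 1) : ℤ) := by
  induction d with
  | zero => decide
  | succ d ih =>
    obtain ⟨h1, h2, h3, h4⟩ := ih
    have e : 5 * (d + 1) + 6 = 5 * d + 6 + 5 := by ring
    have f5 : (Nat.fib (5 * (d + 1 + 1)) : ℤ)
        = 3 * Nat.fib (5 * (d + 1)) + 5 * Nat.fib (5 * (d + 1) + 1) := by
      rw [show 5 * (d + 1 + 1) = 5 * (d + 1) + 5 by ring]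
      simp only [Nat.fib_add_two, Nat.cast_add]
      ring
    have f6 : (Nat.fib (5 * (d + 1 + 1) + 1) : ℤ)
        = 5 * Nat.fib (5 * (d + 1)) + 8 * Nat.fib (5 * (d + 1) + 1) := by
      rw [show 5 * (d + 1 + 1) + 1 = 5 * (d + 1) + 6 by ring]
      simp only [Nat.fib_add_two, Nat.cast_add]
      ring
    have r0 := residueSum_succ_five (5 * d + 6) 0
    have r1 := residueSum_succ_five (5 * d + 6) 1
    have r2 := residueSum_succ_five (5 * d + 6) 2
    have r3 := residueSum_succ_five (5 * d + 6) 3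
    have r4 := residueSum_succ_five (5 * d + 6) 4
    reduce_mod_char at r0 r1 r2 r3 r4
    rw [e, f5, f6, r0, r1, r2, r3, r4, pow_succ (-1 : ℤ) (d + 1)]
    refine ⟨?_, ?_, ?_, ?_⟩
    · linarith
    · linarith
    · linear_combination -3 * h3 - 5 * h4 + 5 * h1 - 5 * h2
    · linear_combination -5 * h3 - 8 * h4 + 5 * h2

theorem sum_range_arith (f : ℕ → ℤ) (r M : ℕ) (hr : r < 5) :
    ∑ q ∈ Finset.range M, f (5 * q + r)
      = ∑ k ∈ Finset.range (5 * M), if (k : ZMod 5) = (r : ZMod 5) then f k else 0 := by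
  simp only [ZMod.natCast_eq_natCast_iff']
  induction M with
  | zero => simp
  | succ M ih =>
    rw [Finset.sum_range_succ, ih, show 5 * (M + 1) = 5 * M + 1 + 1 + 1 + 1 + 1 by ring]
    simp only [Finset.sum_range_succ]
    interval_cases r <;> simp [Nat.add_mod]

theorem sum_choose_eq_residueSum (n r M : ℕ) (hr : r < 5) (hM : n + 1 ≤ 5 * M) :
    ∑ q ∈ Finset.range M, (n.choose (5 * q + r) : ℤ) = residueSum n r := by
  rw [sum_range_arith (fun k => (n.choose k : ℤ)) r M hr, residueSum]
  symm
  refine Finset.sum_subset (Finset.range_mono hM) fun k _ hk => ?_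
  rw [Nat.choose_eq_zero_of_lt (by simpa using hk)]
  simp

theorem binomR_natCast (n k : ℕ) : binomR (n : ℤ) (k : ℤ) = (n.choose k : ℝ) := by
  unfold binomR
  split_ifs with h
  · simp
  · rw [Nat.choose_eq_zero_of_lt (by omega)]
    simp

/-- The self-intersection numbers `⟨x₁^{6+5d}⟩` on `Hol_d(CP¹ → G₂(C⁵))` are the
Fibonacci numbers `F_{5(d+1)}`. -/
theorem self_intersection_fibonacci (d : ℕ) :
    ((-1 : ℝ) ^ (d + 1) / 2) * ∑' q : ℕ,
        (binomR (8 + 5 * (d : ℤ)) (5 * ((q : ℤ) + 1) - 1)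
          - 4 * binomR (6 + 5 * (d : ℤ)) (5 * ((q : ℤ) + 1) - 2))
      = (Nat.fib (5 * (d + 1)) : ℝ) := by
  have hterm : ∀ q : ℕ, binomR (8 + 5 * (d : ℤ)) (5 * ((q : ℤ) + 1) - 1)
      - 4 * binomR (6 + 5 * (d : ℤ)) (5 * ((q : ℤ) + 1) - 2)
      = (((5 * d + 8).choose (5 * q + 4) : ℝ) - 4 * ((5 * d + 6).choose (5 * q + 3) : ℝ)) := by
    intro q
    rw [← binomR_natCast, ← binomR_natCast]
    congr 3 <;> push_cast <;> ring
  have hsum : ∑ q ∈ Finset.range (d + 2),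
      (((5 * d + 8).choose (5 * q + 4) : ℤ) - 4 * ((5 * d + 6).choose (5 * q + 3) : ℤ))
      = 2 * ((-1) ^ (d + 1) * (Nat.fib (5 * (d + 1)) : ℤ)) := by
    obtain ⟨-, h2, h3, -⟩ := residueSum_fib d
    rw [Finset.sum_sub_distrib, ← Finset.mul_sum,
      sum_choose_eq_residueSum _ 4 _ (by norm_num) (by omega),
      sum_choose_eq_residueSum _ 3 _ (by norm_num) (by omega),
      residueSum_succ (5 * d + 7), residueSum_succ (5 * d + 6), residueSum_succ (5 * d + 6)]
    push_cast
    reduce_mod_char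
    linarith
  have hsumR := congrArg (Int.cast : ℤ → ℝ) hsum
  push_cast at hsumR
  simp only [hterm]
  rw [tsum_eq_sum (s := Finset.range (d + 2)), hsumR]
  · have hsq : ((-1 : ℝ) ^ (d + 1)) * (-1) ^ (d + 1) = 1 := by
      rw [← mul_pow]
      simp
    linear_combination (Nat.fib (5 * (d + 1)) : ℝ) * hsq
  · intro q hq
    have hq : d + 2 ≤ q := by simpa using hq
    rw [Nat.choose_eq_zero_of_lt (by omega), Nat.choose_eq_zero_of_lt (by omega)]
    simp
end

section
/- For all integers d ≥ 0 and 0 ≤ k ≤ 2d+1, one has ((−1)^{d+1}/2)·∑_{q ≥ 1} [ C(6+4d−2k, 4q−(k+1)) − 4·C(4+4d−2k, 4q−(k+2)) ] = 2^{2d+1−k}, where the sum over positive integers q has only finitely many nonzero terms. -/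
/-- The real part of `i ^ t`, for an integer `t`. -/
noncomputable def reIPow (t : ℤ) : ℝ :=
  if t % 4 = 0 then 1 else if t % 4 = 2 then -1 else 0

lemma reIPow_add_two (t : ℤ) : reIPow (t + 2) = -reIPow t := by
  have h : t % 4 = 0 ∨ t % 4 = 1 ∨ t % 4 = 2 ∨ t % 4 = 3 := by omega
  rcases h with h | h | h | h <;> simp [reIPow, Int.add_emod, h]

lemma reIPow_two_mul_add_four (d : ℕ) : reIPow (2 * (d : ℤ) + 4) = (-1) ^ d := by
  induction d with
  | zero => simp [reIPow]
  | succ d ih =>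
    rw [show 2 * ((d + 1 : ℕ) : ℤ) + 4 = (2 * (d : ℤ) + 4) + 2 by push_cast; ring,
      reIPow_add_two, ih]
    ring

lemma binomR_of_neg {a b : ℤ} (hb : b < 0) : binomR a b = 0 :=
  if_neg (by omega)

lemma binomR_natCast_s15 (a b : ℕ) : binomR a b = (a.choose b : ℝ) := by
  unfold binomR
  split_ifs with h
  · simp
  · rw [Nat.choose_eq_zero_of_lt (by omega)]
    simp

/-- Pascal's rule, valid for every integer lower index. -/
lemma binomR_succ (n : ℕ) (b : ℤ) :
    binomR ((n + 1 : ℕ) : ℤ) b = binomR n b + binomR n (b - 1) := by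
  rcases lt_trichotomy b 0 with hb | rfl | hb
  · simp [binomR_of_neg hb, binomR_of_neg (show b - 1 < 0 by omega)]
  · rw [binomR_of_neg (show (0 : ℤ) - 1 < 0 by omega)]
    have h₁ := binomR_natCast_s15 (n + 1) 0
    have h₂ := binomR_natCast_s15 n 0
    simp only [Nat.cast_zero, Nat.choose_zero_right] at h₁ h₂
    rw [h₁, h₂, add_zero]
  · obtain ⟨j, rfl⟩ : ∃ j : ℕ, b = ((j + 1 : ℕ) : ℤ) := ⟨(b - 1).toNat, by omega⟩
    rw [show ((j + 1 : ℕ) : ℤ) - 1 = (j : ℤ) by push_cast; ring]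
    rw [binomR_natCast_s15, binomR_natCast_s15, binomR_natCast_s15, Nat.choose_succ_succ', Nat.cast_add,
      add_comm]

/-- Pascal's rule applied twice and summed over a residue class modulo 4. -/
lemma hasSum_binomR_add_two {n : ℕ} {r : ℤ} {x y z : ℝ}
    (hx : HasSum (fun q : ℤ => binomR n (4 * q - r)) x)
    (hy : HasSum (fun q : ℤ => binomR n (4 * q - (r + 1))) y)
    (hz : HasSum (fun q : ℤ => binomR n (4 * q - (r + 2))) z) :
    HasSum (fun q : ℤ => binomR ((n + 2 : ℕ) : ℤ) (4 * q - r)) (x + 2 * y + z) := by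
  convert (hx.add (hy.mul_left 2)).add hz using 2 with q
  rw [binomR_succ (n + 1), binomR_succ n, binomR_succ n,
    show 4 * q - r - 1 = 4 * q - (r + 1) by ring,
    show 4 * q - (r + 1) - 1 = 4 * q - (r + 2) by ring]
  ring

lemma hasSum_binomR_zero (r : ℤ) :
    HasSum (fun q : ℤ => binomR ((0 : ℕ) : ℤ) (4 * q - r)) (if r % 4 = 0 then 1 else 0) := by
  have h : (if r % 4 = 0 then (1 : ℝ) else 0) = binomR ((0 : ℕ) : ℤ) (4 * (r / 4) - r) := by
    by_cases h : r % 4 = 0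
    · rw [show 4 * (r / 4) - r = 0 by omega]
      simp [binomR, h]
    · rw [if_neg h, binomR, if_neg (by omega)]
  rw [h]
  refine hasSum_single (r / 4) fun q hq => ?_
  exact if_neg (by omega)

/-- `∑_q C(2m+2, 4q-r) = 4^m + 2^m Re(i^(m+1+r))`. The upper index has to be positive: for upper
index `0` the roots of unity filter has the additional contribution `0 ^ 0` of the root `-1`. -/
lemma hasSum_binomR (m : ℕ) (r : ℤ) :
    HasSum (fun q : ℤ => binomR ((2 * m + 2 : ℕ) : ℤ) (4 * q - r))
      (4 ^ m + 2 ^ m * reIPow (m + 1 + r)) := by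
  induction m generalizing r with
  | zero =>
    convert hasSum_binomR_add_two (hasSum_binomR_zero r) (hasSum_binomR_zero (r + 1))
      (hasSum_binomR_zero (r + 2)) using 1
    have h : r % 4 = 0 ∨ r % 4 = 1 ∨ r % 4 = 2 ∨ r % 4 = 3 := by omega
    rcases h with h | h | h | h <;> simp [reIPow, Int.add_emod, h] <;> norm_num
  | succ m ih =>
    rw [show 2 * (m + 1) + 2 = 2 * m + 2 + 2 by ring]
    convert hasSum_binomR_add_two (ih r) (ih (r + 1)) (ih (r + 2)) using 1
    rw [← add_assoc (m + 1 : ℤ) r 2, reIPow_add_two,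
      show ((m + 1 : ℕ) : ℤ) + 1 + r = m + 1 + (r + 1) by push_cast; ring]
    ring

/-- The `HasSum` of a residue class restricted to `q ≥ 1`, when the terms with `q ≤ 0` have negative
lower index. -/
lemma hasSum_binomR_nat {a r : ℤ} {x : ℝ} (hr : 0 < r)
    (h : HasSum (fun q : ℤ => binomR a (4 * q - r)) x) :
    HasSum (fun q : ℕ => binomR a (4 * ((q : ℤ) + 1) - r)) x := by
  have hinj : Function.Injective fun q : ℕ => (q : ℤ) + 1 := fun p q hpq => by
    simpa using hpq
  refine (hinj.hasSum_iff (f := fun q : ℤ => binomR a (4 * q - r)) fun q hq => ?_).mpr h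
  refine binomR_of_neg ?_
  by_contra hneg
  exact hq ⟨(q - 1).toNat, by simp only; omega⟩

/-- The two-point intersection numbers `⟨x₁^{4+4d−2k} x₂^k⟩` on `Hol_d(CP¹ → G₂(C⁴))`
are the powers of two `2^{2d+1−k}`. -/
theorem two_point_powers_of_two (d k : ℕ) (hk : k ≤ 2 * d + 1) :
    ((-1 : ℝ) ^ (d + 1) / 2) * ∑' q : ℕ,
        (binomR (6 + 4 * (d : ℤ) - 2 * (k : ℤ)) (4 * ((q : ℤ) + 1) - ((k : ℤ) + 1))
          - 4 * binomR (4 + 4 * (d : ℤ) - 2 * (k : ℤ)) (4 * ((q : ℤ) + 1) - ((k : ℤ) + 2)))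
      = (2 : ℝ) ^ (2 * d + 1 - k) := by
  obtain ⟨p, hp⟩ : ∃ p, 2 * d + 1 - k = p := ⟨_, rfl⟩
  have h₁ := hasSum_binomR_nat (by omega) (hasSum_binomR (p + 1) (k + 1))
  have h₂ := hasSum_binomR_nat (by omega) (hasSum_binomR p (k + 2))
  rw [show ((2 * (p + 1) + 2 : ℕ) : ℤ) = 6 + 4 * (d : ℤ) - 2 * (k : ℤ) by omega,
    show ((p + 1 : ℕ) : ℤ) + 1 + (k + 1) = 2 * (d : ℤ) + 4 by omega,
    reIPow_two_mul_add_four] at h₁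
  rw [show ((2 * p + 2 : ℕ) : ℤ) = 4 + 4 * (d : ℤ) - 2 * (k : ℤ) by omega,
    show (p : ℤ) + 1 + (k + 2) = 2 * (d : ℤ) + 4 by omega,
    reIPow_two_mul_add_four] at h₂
  rw [(h₁.sub (h₂.mul_left 4)).tsum_eq, hp]
  have hsq : (-1 : ℝ) ^ d * (-1) ^ d = 1 := by rw [← mul_pow]; norm_num
  linear_combination (2 : ℝ) ^ p * hsq
end
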